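/- Recovering algorithmic-dependent bounds from a parametric function: Let ℓ : H × Z → ℝ be a measurable loss, φ : ℝ² → ℝ measurable, P a prior density on H, S ↦ h_S a measurable learning algorithm from Z^m to H, δ ∈ (0,1], and suppose Φ_a : (0,1] → ℝ is an algorithmic-dependent generalization bound, i.e. for every δ′ ∈ (0,1], P_{S∼D^m}[ φ(R_D^ℓ(h_S), R_S^ℓ(h_S)) ≤ Φ_a(δ′) ] ≥ 1−δ′. Then, setting μ(h,S) = −φ(R_D^ℓ(h), R_S^ℓ(h)) − Φ_a(δ/2) − ln P(h), Theorem 3 applied with this μ yields: with probability at least 1−δ over S ∼ D^m and h′ ∼ P (independent), φ(R_D^ℓ(h_S), R_S^ℓ(h_S)) ≤ Φ_a(δ/2) + ln[(16/δ²)·E_{V∼D^m} E_{g∼P} e^{φ(R_D^ℓ(g), R_V^ℓ(g)) − φ(R_D^ℓ(h′), R_S^ℓ(h′))}]. -/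

import Mathlib

open MeasureTheory ProbabilityTheory

/-- The true risk `R_D^ℓ(h) = E_{z∼D} ℓ(h,z)`. -/
noncomputable def trueRisk {H Z : Type*} [MeasurableSpace Z]
    (D : Measure Z) (ℓ : H → Z → ℝ) (h : H) : ℝ :=
  ∫ z, ℓ h z ∂D

/-- The empirical risk `R_S^ℓ(h) = (1/m) Σ_{i=1}^m ℓ(h,z_i)`. -/
noncomputable def empRisk {H Z : Type*} {m : ℕ}
    (ℓ : H → Z → ℝ) (h : H) (S : Fin m → Z) : ℝ :=
  (∑ i, ℓ h (S i)) / m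

/-!
Write `f S h` for `φ (R_D h) (R_S h)`. The logarithm in the bound is nonnegative exactly when
`exp (f S h') ≤ (16 / δ²) * ∫ exp f`, which by Markov's inequality fails with probability at most
`δ² / 16 ≤ δ / 2`; the assumed bound `f S (A S) ≤ Φa (δ / 2)` fails with probability at most
`δ / 2`.
-/

section Deviation

variable {α : Type*} [MeasurableSpace α] {μ : Measure α}

theorem measure_mul_lintegral_lt_le_inv {f : α → ENNReal} (hf : AEMeasurable f μ) (c : ENNReal) :
    μ {x | c * ∫⁻ y, f y ∂μ < f x} ≤ c⁻¹ := by
  rcases eq_or_ne (∫⁻ y, f y ∂μ) 0 with h_zero | h_ne_zero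
  · have f_ae_zero : ∀ᵐ x ∂μ, ¬ 0 < f x := by
      filter_upwards [(lintegral_eq_zero_iff' hf).1 h_zero] with x hx
      simp [hx]
    have measure_pos_eq_zero : μ {x | 0 < f x} = 0 := measure_eq_zero_iff_ae_notMem.2 f_ae_zero
    simp only [h_zero, mul_zero, measure_pos_eq_zero, zero_le]
  rcases eq_or_ne (∫⁻ y, f y ∂μ) ⊤ with h_top | h_ne_top
  · rcases eq_or_ne c 0 with rfl | hc
    · simp
    · simp [h_top, ENNReal.mul_top hc]
  rw [ENNReal.le_inv_iff_mul_le, mul_comm, ← ENNReal.mul_le_mul_iff_right h_ne_zero h_ne_top]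
  calc (∫⁻ y, f y ∂μ) * (c * μ {x | c * ∫⁻ y, f y ∂μ < f x})
      = c * (∫⁻ y, f y ∂μ) * μ {x | c * ∫⁻ y, f y ∂μ < f x} := by ring
    _ ≤ c * (∫⁻ y, f y ∂μ) * μ {x | c * ∫⁻ y, f y ∂μ ≤ f x} := by
      gcongr with x
      exact le_of_lt
    _ ≤ ∫⁻ y, f y ∂μ := mul_meas_ge_le_lintegral₀ hf _
    _ = (∫⁻ y, f y ∂μ) * 1 := (mul_one _).symm

theorem lintegral_ofReal_exp_sub (f : α → ℝ) (a : ℝ) :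
    ∫⁻ x, ENNReal.ofReal (Real.exp (f x - a)) ∂μ =
      (∫⁻ x, ENNReal.ofReal (Real.exp (f x)) ∂μ) / ENNReal.ofReal (Real.exp a) := by
  simp_rw [Real.exp_sub, ENNReal.ofReal_div_of_pos (Real.exp_pos a), div_eq_mul_inv]
  exact lintegral_mul_const' _ _ (by simp [Real.exp_pos])

theorem zero_le_log_mul_lintegral_exp_sub_iff {f : α → ℝ} {a : ℝ} {c : ENNReal} :
    0 ≤ ENNReal.log (c * ∫⁻ x, ENNReal.ofReal (Real.exp (f x - a)) ∂μ) ↔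
      ENNReal.ofReal (Real.exp a) ≤ c * ∫⁻ x, ENNReal.ofReal (Real.exp (f x)) ∂μ := by
  rw [ENNReal.zero_le_log_iff, lintegral_ofReal_exp_sub, ← mul_div_assoc,
    ENNReal.le_div_iff_mul_le (by simp [Real.exp_pos]) (by simp), one_mul]

theorem measure_log_mul_lintegral_exp_sub_lt_zero_le_inv {f : α → ℝ} (hf : AEMeasurable f μ)
    (c : ENNReal) :
    μ {x | ENNReal.log (c * ∫⁻ y, ENNReal.ofReal (Real.exp (f y - f x)) ∂μ) < 0} ≤ c⁻¹ := by
  simp_rw [← not_le, zero_le_log_mul_lintegral_exp_sub_iff, not_le]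
  exact measure_mul_lintegral_lt_le_inv hf.exp.ennreal_ofReal c

theorem tsub_add_le_measure_inter {s t : Set α} {a ε₁ ε₂ : ENNReal} (hs : a - ε₁ ≤ μ s)
    (ht : μ tᶜ ≤ ε₂) : a - (ε₁ + ε₂) ≤ μ (s ∩ t) := by
  rw [← tsub_tsub, tsub_le_iff_right]
  calc a - ε₁ ≤ μ s := hs
    _ ≤ μ (s ∩ t) + μ (s \ t) := measure_le_inter_add_sdiff μ s t
    _ ≤ μ (s ∩ t) + ε₂ := by gcongr; exact (measure_mono fun _ hx => hx.2).trans ht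

end Deviation

section Risk

variable {H Z : Type*} [MeasurableSpace H] [MeasurableSpace Z] {ℓ : H → Z → ℝ}

theorem measurable_trueRisk (D : Measure Z) [SFinite D] (hℓ : Measurable (Function.uncurry ℓ)) :
    Measurable (trueRisk D ℓ) :=
  (hℓ.stronglyMeasurable.integral_prod_right (ν := D)).measurable

theorem measurable_empRisk (m : ℕ) (hℓ : Measurable (Function.uncurry ℓ)) :
    Measurable fun p : (Fin m → Z) × H => empRisk ℓ p.2 p.1 :=
  (Finset.measurable_fun_sum _ fun i _ =>
    hℓ.comp (measurable_snd.prodMk ((measurable_pi_apply i).comp measurable_fst))).div_const _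

theorem measurable_comp_trueRisk_empRisk (m : ℕ) (D : Measure Z) [SFinite D]
    (hℓ : Measurable (Function.uncurry ℓ)) {φ : ℝ → ℝ → ℝ}
    (hφ : Measurable (Function.uncurry φ)) :
    Measurable (Function.uncurry fun (S : Fin m → Z) h => φ (trueRisk D ℓ h) (empRisk ℓ h S)) :=
  hφ.comp (((measurable_trueRisk D hℓ).comp measurable_snd).prodMk (measurable_empRisk m hℓ))

end Risk

theorem ofReal_half_add_inv_ofReal_sixteen_div_sq_le {δ : ℝ} (hδ : δ ∈ Set.Ioc (0 : ℝ) 8) :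
    ENNReal.ofReal (δ / 2) + (ENNReal.ofReal (16 / δ ^ 2))⁻¹ ≤ ENNReal.ofReal δ := by
  obtain ⟨hδ_pos, hδ_le⟩ := hδ
  rw [← ENNReal.ofReal_inv_of_pos (by positivity),
    ← ENNReal.ofReal_add (by positivity) (by positivity), inv_div]
  exact ENNReal.ofReal_le_ofReal (by nlinarith)

theorem algorithmic_bound_from_parametric_function_general
    {Ω H : Type*} [MeasurableSpace Ω] [MeasurableSpace H]
    {μ : Measure Ω} {π : Measure H} [IsProbabilityMeasure π]
    {f : Ω → H → ℝ} (hf : AEMeasurable (Function.uncurry f) (μ.prod π))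
    {X : Ω → ℝ} {b : ℝ} {ε : ENNReal} (hX : 1 - ε ≤ μ {ω | X ω ≤ b}) (c : ENNReal) :
    1 - (ε + c⁻¹) ≤
      (μ.prod π) {p | (X p.1 : EReal) ≤
        b + ENNReal.log (c *
          ∫⁻ ω, ∫⁻ h, ENNReal.ofReal (Real.exp (f ω h - f p.1 p.2)) ∂π ∂μ)} := by
  have iterated_eq (a : ℝ) : ∫⁻ ω, ∫⁻ h, ENNReal.ofReal (Real.exp (f ω h - a)) ∂π ∂μ =
      ∫⁻ q, ENNReal.ofReal (Real.exp (Function.uncurry f q - a)) ∂μ.prod π :=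
    (lintegral_prod _ (hf.sub_const a).exp.ennreal_ofReal).symm
  have hX_prod : 1 - ε ≤ (μ.prod π) ({ω | X ω ≤ b} ×ˢ Set.univ) := by
    simpa only [Measure.prod_prod, measure_univ, mul_one] using hX
  have log_neg_le : (μ.prod π) {p | 0 ≤ ENNReal.log (c *
      ∫⁻ ω, ∫⁻ h, ENNReal.ofReal (Real.exp (f ω h - f p.1 p.2)) ∂π ∂μ)}ᶜ ≤ c⁻¹ := by
    simp_rw [iterated_eq, Set.compl_ofPred, not_le]
    exact measure_log_mul_lintegral_exp_sub_lt_zero_le_inv hf c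
  refine (tsub_add_le_measure_inter hX_prod log_neg_le).trans (measure_mono ?_)
  rintro p ⟨⟨hXp, -⟩, log_nonneg⟩
  exact le_add_of_le_of_nonneg (EReal.coe_le_coe_iff.2 hXp) log_nonneg

/-- **Recovering algorithmic-dependent bounds from a parametric function.**
If `Φ_a` is an algorithmic-dependent generalization bound for the algorithm
`S ↦ h_S`, then (applying the main theorem with
`μ(h,S) = −φ(R_D^ℓ(h), R_S^ℓ(h)) − Φ_a(δ/2) − ln P(h)`) with probability at
least `1−δ` over `S ∼ D^m` and `h′ ∼ P` independent,
`φ(R_D^ℓ(h_S), R_S^ℓ(h_S)) ≤ Φ_a(δ/2)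
  + ln[(16/δ²)·E_{V∼D^m} E_{g∼P} e^{φ(R_D^ℓ(g),R_V^ℓ(g)) − φ(R_D^ℓ(h′),R_S^ℓ(h′))}]`
(stated in `EReal`). -/
theorem algorithmic_bound_from_parametric_function
    {Z H : Type*} [MeasurableSpace Z] [MeasurableSpace H]
    (m : ℕ) (hm : 0 < m)
    (D : Measure Z) [IsProbabilityMeasure D]
    (lam : Measure H) [SigmaFinite lam]
    (ℓ : H → Z → ℝ) (hℓ : Measurable (Function.uncurry ℓ))
    (φ : ℝ → ℝ → ℝ) (hφ : Measurable (Function.uncurry φ))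
    (P : H → ℝ) (hPpos : ∀ h, 0 < P h) (hPmeas : Measurable P)
    (Pm : Measure H) [IsProbabilityMeasure Pm]
    (hPm : Pm = lam.withDensity fun h => ENNReal.ofReal (P h))
    -- the learning algorithm
    (A : (Fin m → Z) → H) (hA : Measurable A)
    (δ : ℝ) (hδ : δ ∈ Set.Ioc (0:ℝ) 1)
    -- `Φ_a` is an algorithmic-dependent generalization bound
    (Φa : ℝ → ℝ)
    (hΦa : ∀ δ' ∈ Set.Ioc (0:ℝ) 1,
      1 - ENNReal.ofReal δ' ≤
        (Measure.pi (fun _ : Fin m => D))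
          {S : Fin m → Z |
            φ (trueRisk D ℓ (A S)) (empRisk ℓ (A S) S) ≤ Φa δ'})
    -- the Gibbs normalizer of `μ(h,S) = −φ(R_D(h),R_S(h)) − Φ_a(δ/2) − ln P(h)`
    -- is finite and positive for each `S`
    (hμint : ∀ S : Fin m → Z, Integrable (fun g =>
      Real.exp (-(-(φ (trueRisk D ℓ g) (empRisk ℓ g S)) - Φa (δ/2)
        - Real.log (P g)))) lam)
    (hZpos : ∀ S : Fin m → Z, 0 < ∫ g,
      Real.exp (-(-(φ (trueRisk D ℓ g) (empRisk ℓ g S)) - Φa (δ/2)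
        - Real.log (P g))) ∂lam) :
    1 - ENNReal.ofReal δ ≤
      ((Measure.pi (fun _ : Fin m => D)).prod Pm)
        {p : (Fin m → Z) × H |
          (φ (trueRisk D ℓ (A p.1)) (empRisk ℓ (A p.1) p.1) : EReal) ≤
            ((Φa (δ/2) : ℝ) : EReal)
            + ENNReal.log (ENNReal.ofReal (16/δ^2) *
                ∫⁻ V, ∫⁻ g, ENNReal.ofReal
                    (Real.exp (φ (trueRisk D ℓ g) (empRisk ℓ g V)
                      - φ (trueRisk D ℓ p.2) (empRisk ℓ p.2 p.1))) ∂Pm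
                  ∂(Measure.pi (fun _ : Fin m => D))) } := by
  have half_mem : δ / 2 ∈ Set.Ioc (0 : ℝ) 1 := ⟨by linarith [hδ.1], by linarith [hδ.2]⟩
  have failure_le := ofReal_half_add_inv_ofReal_sixteen_div_sq_le ⟨hδ.1, by linarith [hδ.2]⟩
  exact (tsub_le_tsub_left failure_le 1).trans <|
    algorithmic_bound_from_parametric_function_general
      (measurable_comp_trueRisk_empRisk m D hℓ hφ).aemeasurable (hΦa _ half_mem) _
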